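/- arXiv:2405.19071 — 2 statements merged into one kernel-verified Lean document; each statement's English description precedes it below -/
import Mathlib

section
/- For online bin stretching with m = 3 bins, every behavioral randomized online algorithm A satisfies sup over all instances I of E(I,A) ≥ 19/16; in other words, no randomized online algorithm has stretching factor strictly less than 19/16. -/
/-!
Yao's principle on three instances, scaled by 4 for readability: after the common prefix `1, 1, 1`
the input continues with `4, 4` with probability `1/2`, with `3, 3, 3` with probability `1/4`, and
with `2, 3, 4` with probability `1/4`.

During the prefix an algorithm cannot tell the three instances apart, so its first three decisions
have the same distribution on all of them. Depending on these decisions, the best loads reachable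
on the three instances are

* `4`, `6`, `5` if the three small items share a bin,
* `5`, `5`, `4` if they occupy exactly two bins,
* `5`, `4`, `5` if they are in three different bins,

and in each row `2 * first + second + third = 19`. Hence `2 E₁ + E₂ + E₃ ≥ 19 / 4` for the three
expected payoffs, and one of them is at least `19 / 16`. The lemma `le_expPayoff` reduces a lower
bound for an expected payoff to the distribution `initialProb` of the first three decisions.
-/

open scoped BigOperators

namespace BinStretch

def Fits (m : ℕ) (I : List ℝ) : Prop :=
  ∃ σ : Fin I.length → Fin m,
    ∀ b : Fin m, ∑ i ∈ Finset.univ.filter fun i => σ i = b, I.get i ≤ 1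

def IsInstance (m : ℕ) (I : List ℝ) : Prop :=
  (∀ a ∈ I, 0 < a ∧ a ≤ 1) ∧ Fits m I

noncomputable def payoff (m : ℕ) (I : List ℝ) (D : Fin I.length → Fin m) : ℝ :=
  ⨆ b : Fin m, ∑ i ∈ Finset.univ.filter fun i => D i = b, I.get i

noncomputable def prob {m : ℕ} (A : List ℝ → PMF (Fin m)) (I : List ℝ)
    (D : Fin I.length → Fin m) : ℝ :=
  ∏ i : Fin I.length, ((A (I.take (i.1 + 1))) (D i)).toReal

noncomputable def expPayoff (m : ℕ) (A : List ℝ → PMF (Fin m)) (I : List ℝ) : ℝ :=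
  ∑ D : Fin I.length → Fin m, prob A I D * payoff m I D

def detRun {m : ℕ} (A : List ℝ → Fin m) (I : List ℝ) : Fin I.length → Fin m :=
  fun i => A (I.take (i.1 + 1))

end BinStretch

namespace BinStretch

/-- Summing out the decisions after the `k`-th one leaves the marginal of the first `k`. -/
lemma sum_prod_mul_marginal {α : Type*} [Fintype α] (k j : ℕ) (p : Fin (k + j) → α → ℝ)
    (hp : ∀ i, ∑ a, p i a = 1) (φ : (Fin k → α) → ℝ) :
    ∑ D : Fin (k + j) → α, (∏ i, p i (D i)) * φ (fun i => D (Fin.castAdd j i)) =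
      ∑ d : Fin k → α, (∏ i, p (Fin.castAdd j i) (d i)) * φ d := by
  classical
  rw [← (Fin.appendEquiv k j).sum_comp, Fintype.sum_prod_type]
  refine Finset.sum_congr rfl fun d _ => ?_
  have h1 : ∑ e : Fin j → α, ∏ i, p (Fin.natAdd k i) (e i) = 1 := by
    rw [← Fintype.prod_sum]
    simp [hp]
  simp only [Fin.appendEquiv, Equiv.coe_fn_mk, Fin.prod_univ_add, Fin.append_left,
    Fin.append_right]
  rw [← Finset.sum_mul, ← Finset.mul_sum, h1, mul_one]

lemma sum_toReal_eq_one {m : ℕ} (q : PMF (Fin m)) : ∑ a, (q a).toReal = 1 := by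
  rw [← ENNReal.toReal_sum fun a _ => q.apply_ne_top a, ← tsum_fintype (L := .unconditional _),
    q.tsum_coe]
  simp

lemma prob_nonneg {m : ℕ} (A : List ℝ → PMF (Fin m)) (I : List ℝ) (D : Fin I.length → Fin m) :
    0 ≤ prob A I D :=
  Finset.prod_nonneg fun _ _ => ENNReal.toReal_nonneg

lemma sum_prob {m : ℕ} (A : List ℝ → PMF (Fin m)) (I : List ℝ) :
    ∑ D, prob A I D = 1 := by
  classical
  unfold prob
  rw [← Fintype.prod_sum fun (i : Fin I.length) a => (A (I.take (i.1 + 1)) a).toReal]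
  simp [sum_toReal_eq_one]

/-- All items fit into `m` unit bins, so their total size, and hence every load, is at most `m`. -/
lemma payoff_le {m : ℕ} {I : List ℝ} (hI : IsInstance m I) (D : Fin I.length → Fin m) :
    payoff m I D ≤ m := by
  obtain ⟨hpos, σ, hσ⟩ := hI
  refine Real.iSup_le (fun b => ?_) (Nat.cast_nonneg m)
  calc ∑ i ∈ Finset.univ.filter fun i => D i = b, I.get i
      ≤ ∑ i, I.get i :=
        Finset.sum_le_sum_of_subset_of_nonneg (Finset.filter_subset _ _)
          fun i _ _ => (hpos _ (I.get_mem i)).1.le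
    _ = ∑ c : Fin m, ∑ i ∈ Finset.univ.filter fun i => σ i = c, I.get i :=
        (Finset.sum_fiberwise _ _ _).symm
    _ ≤ ∑ _c : Fin m, (1 : ℝ) := Finset.sum_le_sum fun c _ => hσ c
    _ = m := by simp

lemma expPayoff_le {m : ℕ} (A : List ℝ → PMF (Fin m)) {I : List ℝ} (hI : IsInstance m I) :
    expPayoff m A I ≤ m :=
  calc expPayoff m A I ≤ ∑ D, prob A I D * (m : ℝ) :=
        Finset.sum_le_sum fun D _ => mul_le_mul_of_nonneg_left (payoff_le hI D) (prob_nonneg A I D)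
    _ = m := by rw [← Finset.sum_mul, sum_prob, one_mul]

/-- A real supremum is `0` when unbounded, so boundedness is needed before comparing with it. -/
lemma bddAbove_expPayoff {m : ℕ} (A : List ℝ → PMF (Fin m)) :
    BddAbove (Set.range fun I : {I : List ℝ // IsInstance m I} => expPayoff m A I.1) :=
  ⟨m, by rintro _ ⟨I, rfl⟩; exact expPayoff_le A I.2⟩

/-- The probability that `A` takes the decisions `d` on the items `1/4, 1/4, 1/4`. -/
noncomputable def initialProb (A : List ℝ → PMF (Fin 3)) (d : Fin 3 → Fin 3) : ℝ :=
  ∏ i, (A (List.replicate (i.1 + 1) (1 / 4)) (d i)).toReal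

lemma sum_initialProb (A : List ℝ → PMF (Fin 3)) : ∑ d, initialProb A d = 1 := by
  classical
  unfold initialProb
  rw [← Fintype.prod_sum fun (i : Fin 3) a =>
    (A (List.replicate (i.1 + 1) (1 / 4)) a).toReal]
  simp [sum_toReal_eq_one]

/-- If some bin always gets load at least `φ d / 4`, where `d` are the first three decisions, then
the expected payoff is at least the mean of `φ d / 4` under `initialProb`. The items are given as
`w i / 4` with natural numbers `w i`, which makes the hypothesis on loads decidable. -/
lemma le_expPayoff (A : List ℝ → PMF (Fin 3)) (j : ℕ) (l : List ℝ) (hl : l.length = j)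
    (w : Fin (3 + j) → ℕ) (φ : (Fin 3 → Fin 3) → ℕ)
    (hw : ∀ i : Fin (3 + j), (1 / 4 :: 1 / 4 :: 1 / 4 :: l).get (i.cast (by simp; omega)) =
      (w i : ℝ) / 4)
    (hφ : ∀ D : Fin (3 + j) → Fin 3,
      ∃ b, φ (fun i => D (Fin.castAdd j i)) ≤ ∑ i, if D i = b then w i else 0) :
    ∑ d, initialProb A d * ((φ d : ℝ) / 4) ≤ expPayoff 3 A (1 / 4 :: 1 / 4 :: 1 / 4 :: l) := by
  subst hl
  set I : List ℝ := 1 / 4 :: 1 / 4 :: 1 / 4 :: l with hI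
  have hlen : 3 + l.length = I.length := by simp [hI]; omega
  have hpay : ∀ D : Fin (3 + l.length) → Fin 3,
      (φ (fun i => D (Fin.castAdd _ i)) : ℝ) / 4 ≤ payoff 3 I (fun i => D (i.cast hlen.symm)) := by
    intro D
    obtain ⟨b, hb⟩ := hφ D
    refine le_trans ?_ (le_ciSup (Set.finite_range _).bddAbove b)
    have hsum : ∑ i ∈ Finset.univ.filter (fun i : Fin I.length => D (i.cast hlen.symm) = b),
        I.get i = ((∑ i, if D i = b then w i else 0 : ℕ) : ℝ) / 4 := by
      rw [Finset.sum_filter, ← (finCongr hlen).sum_comp, Nat.cast_sum, Finset.sum_div]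
      refine Finset.sum_congr rfl fun i _ => ?_
      by_cases h : D i = b
      · have hwi : I.get (i.cast hlen) = (w i : ℝ) / 4 := hw i
        simpa [h] using hwi
      · simp [h]
    rw [hsum]
    have : (φ (fun i => D (Fin.castAdd _ i)) : ℝ) ≤ (∑ i, if D i = b then w i else 0 : ℕ) := by
      exact_mod_cast hb
    linarith
  have hmarg := sum_prod_mul_marginal 3 l.length
    (fun i a => (A (I.take (i.1 + 1)) a).toReal) (fun i => sum_toReal_eq_one _)
    (fun d => (φ d : ℝ) / 4)
  -- The first `i + 1 ≤ 3` items of `I` are all equal to `1 / 4`.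
  have hpre : ∀ d, ∏ i : Fin 3, (A (I.take ((Fin.castAdd l.length i).1 + 1)) (d i)).toReal =
      initialProb A d := by
    intro d
    simp [initialProb, Fin.prod_univ_three, hI, List.replicate]
  simp only [hpre] at hmarg
  rw [← hmarg]
  unfold expPayoff
  rw [← (Equiv.arrowCongr (finCongr hlen) (Equiv.refl (Fin 3))).sum_comp]
  refine Finset.sum_le_sum fun D _ => ?_
  have hprob : prob A I (Equiv.arrowCongr (finCongr hlen) (Equiv.refl (Fin 3)) D) =
      ∏ i : Fin (3 + l.length), (A (I.take (i.1 + 1)) (D i)).toReal := by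
    unfold prob
    rw [← (finCongr hlen).prod_comp]
    rfl
  rw [hprob]
  exact mul_le_mul_of_nonneg_left (hpay D) (Finset.prod_nonneg fun _ _ => ENNReal.toReal_nonneg)

/-- A quantity depending on the number of bins used by three items: `x`, `y` or `z` if they use
one, two or three bins. -/
def byBinsUsed (x y z : ℕ) (d : Fin 3 → Fin 3) : ℕ :=
  if d 0 = d 1 ∧ d 1 = d 2 then x
  else if d 0 = d 1 ∨ d 1 = d 2 ∨ d 0 = d 2 then y
  else z

lemma fits_of_nat {I : List ℝ} (w : Fin I.length → ℕ) (hw : ∀ i, I.get i = (w i : ℝ) / 4)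
    (σ : Fin I.length → Fin 3) (hσ : ∀ b, (∑ i, if σ i = b then w i else 0) ≤ 4) : Fits 3 I := by
  refine ⟨σ, fun b => ?_⟩
  have h : ((∑ i, if σ i = b then w i else 0 : ℕ) : ℝ) ≤ 4 := by exact_mod_cast hσ b
  rw [← Finset.sum_filter] at h
  push_cast at h
  simp only [hw]
  rw [← Finset.sum_div]
  linarith

lemma isInstance_44 : IsInstance 3 [1 / 4, 1 / 4, 1 / 4, 1, 1] := by
  refine ⟨by norm_num, fits_of_nat (![1, 1, 1, 4, 4] : Fin 5 → ℕ) (fun i => ?_)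
    (![0, 0, 0, 1, 2] : Fin 5 → Fin 3) (by decide +kernel)⟩
  change Fin 5 at i
  fin_cases i <;> norm_num

lemma isInstance_333 : IsInstance 3 [1 / 4, 1 / 4, 1 / 4, 3 / 4, 3 / 4, 3 / 4] := by
  refine ⟨by norm_num, fits_of_nat (![1, 1, 1, 3, 3, 3] : Fin 6 → ℕ) (fun i => ?_)
    (![0, 1, 2, 0, 1, 2] : Fin 6 → Fin 3) (by decide +kernel)⟩
  change Fin 6 at i
  fin_cases i <;> norm_num

lemma isInstance_234 : IsInstance 3 [1 / 4, 1 / 4, 1 / 4, 1 / 2, 3 / 4, 1] := by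
  refine ⟨by norm_num, fits_of_nat (![1, 1, 1, 2, 3, 4] : Fin 6 → ℕ) (fun i => ?_)
    (![2, 2, 1, 2, 1, 0] : Fin 6 → Fin 3) (by decide +kernel)⟩
  change Fin 6 at i
  fin_cases i <;> norm_num

lemma le_expPayoff_44 (A : List ℝ → PMF (Fin 3)) :
    ∑ d, initialProb A d * ((byBinsUsed 4 5 5 d : ℝ) / 4) ≤
      expPayoff 3 A [1 / 4, 1 / 4, 1 / 4, 1, 1] := by
  refine le_expPayoff A 2 _ rfl ![1, 1, 1, 4, 4] _ (fun i => ?_) (by decide +kernel)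
  fin_cases i <;> norm_num

lemma le_expPayoff_333 (A : List ℝ → PMF (Fin 3)) :
    ∑ d, initialProb A d * ((byBinsUsed 6 5 4 d : ℝ) / 4) ≤
      expPayoff 3 A [1 / 4, 1 / 4, 1 / 4, 3 / 4, 3 / 4, 3 / 4] := by
  refine le_expPayoff A 3 _ rfl ![1, 1, 1, 3, 3, 3] _ (fun i => ?_) (by decide +kernel)
  fin_cases i <;> norm_num

lemma le_expPayoff_234 (A : List ℝ → PMF (Fin 3)) :
    ∑ d, initialProb A d * ((byBinsUsed 5 4 5 d : ℝ) / 4) ≤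
      expPayoff 3 A [1 / 4, 1 / 4, 1 / 4, 1 / 2, 3 / 4, 1] := by
  refine le_expPayoff A 3 _ rfl ![1, 1, 1, 2, 3, 4] _ (fun i => ?_) (by decide +kernel)
  fin_cases i <;> norm_num

lemma byBinsUsed_sum (d : Fin 3 → Fin 3) :
    2 * byBinsUsed 4 5 5 d + byBinsUsed 6 5 4 d + byBinsUsed 5 4 5 d = 19 := by
  unfold byBinsUsed
  split_ifs <;> rfl

end BinStretch

theorem randomized_lower_bound_three_bins (A : List ℝ → PMF (Fin 3)) :
    (19 : ℝ) / 16 ≤ ⨆ I : {I : List ℝ // BinStretch.IsInstance 3 I},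
      BinStretch.expPayoff 3 A I.1 := by
  have hb := BinStretch.bddAbove_expPayoff A
  have h44 := (BinStretch.le_expPayoff_44 A).trans (le_ciSup hb ⟨_, BinStretch.isInstance_44⟩)
  have h333 := (BinStretch.le_expPayoff_333 A).trans (le_ciSup hb ⟨_, BinStretch.isInstance_333⟩)
  have h234 := (BinStretch.le_expPayoff_234 A).trans (le_ciSup hb ⟨_, BinStretch.isInstance_234⟩)
  have key : 2 * ∑ d, BinStretch.initialProb A d * ((BinStretch.byBinsUsed 4 5 5 d : ℝ) / 4) +
      ∑ d, BinStretch.initialProb A d * ((BinStretch.byBinsUsed 6 5 4 d : ℝ) / 4) +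
      ∑ d, BinStretch.initialProb A d * ((BinStretch.byBinsUsed 5 4 5 d : ℝ) / 4) = 19 / 4 := by
    rw [Finset.mul_sum, ← Finset.sum_add_distrib, ← Finset.sum_add_distrib,
      ← one_mul (19 / 4 : ℝ), ← BinStretch.sum_initialProb A, Finset.sum_mul]
    refine Finset.sum_congr rfl fun d _ => ?_
    have h : (2 * BinStretch.byBinsUsed 4 5 5 d + BinStretch.byBinsUsed 6 5 4 d +
        BinStretch.byBinsUsed 5 4 5 d : ℝ) = 19 := by
      exact_mod_cast BinStretch.byBinsUsed_sum d
    rw [← h]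
    ring
  linarith
end

section
/- For online bin stretching with m = 2 bins, for every deterministic online algorithm A there exists an instance I all of whose item sizes lie in {1/3, 2/3, 1} such that f(I, A(I)) ≥ 4/3; hence no deterministic online algorithm has stretching factor strictly less than 4/3. -/
/-!
The adversary starts with two items of size `1/3`. If the algorithm separates them, both bins have
load `1/3` and an item of size `1` raises one of them to `4/3`. If it puts them together, the
adversary sends two items of size `2/3`: either one of them joins the two small items, or both
share the other bin, and in each case some bin reaches `4/3`. Both item lists fit into two unit
bins.
-/

open scoped BigOperators

namespace BinStretch

theorem load_le_payoff (m : ℕ) (I : List ℝ) (D : Fin I.length → Fin m) (b : Fin m) :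
    ∑ i ∈ Finset.univ.filter (fun i => D i = b), I.get i ≤ payoff m I D :=
  le_ciSup (f := fun b : Fin m => ∑ i ∈ Finset.univ.filter (fun i => D i = b), I.get i)
    (Set.finite_range _).bddAbove b

theorem isInstance_separated : IsInstance 2 [1/3, 1/3, 1] := by
  refine ⟨by intro a ha; simp at ha; rcases ha with rfl | rfl <;> norm_num, ![0, 0, 1], ?_⟩
  intro b
  fin_cases b <;> simp [Finset.sum_filter, Fin.sum_univ_succ] <;> norm_num

theorem isInstance_together : IsInstance 2 [1/3, 1/3, 2/3, 2/3] := by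
  refine ⟨by intro a ha; simp at ha; rcases ha with rfl | rfl <;> norm_num, ![0, 1, 0, 1], ?_⟩
  intro b
  fin_cases b <;> simp [Finset.sum_filter, Fin.sum_univ_succ] <;> norm_num

theorem payoff_separated (A : List ℝ → Fin 2) (h : A [1/3] ≠ A [1/3, 1/3]) :
    4 / 3 ≤ payoff 2 [1/3, 1/3, 1] (detRun A [1/3, 1/3, 1]) := by
  have key : ∀ b, (if A [1/3] = b then (1/3 : ℝ) else 0) + (if A [1/3, 1/3] = b then 1/3 else 0)
      + (if A [1/3, 1/3, 1] = b then 1 else 0)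
        ≤ payoff 2 [1/3, 1/3, 1] (detRun A [1/3, 1/3, 1]) := by
    intro b
    refine le_trans (le_of_eq ?_) (load_le_payoff 2 _ _ b)
    rw [Finset.sum_filter]
    simp [Fin.sum_univ_succ, detRun, add_assoc]
    rfl
  -- The bin that receives the item of size `1` already holds one of the small items.
  have key' := key (A [1/3, 1/3, 1])
  have hz : A [1/3] = A [1/3, 1/3, 1] ∨ A [1/3, 1/3] = A [1/3, 1/3, 1] := by omega
  split_ifs at key' <;> first | linarith | tauto

theorem payoff_together (A : List ℝ → Fin 2) (h : A [1/3] = A [1/3, 1/3]) :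
    4 / 3 ≤ payoff 2 [1/3, 1/3, 2/3, 2/3] (detRun A [1/3, 1/3, 2/3, 2/3]) := by
  have key : ∀ b, (if A [1/3] = b then (1/3 : ℝ) else 0) + (if A [1/3, 1/3] = b then 1/3 else 0)
      + (if A [1/3, 1/3, 2/3] = b then 2/3 else 0)
      + (if A [1/3, 1/3, 2/3, 2/3] = b then 2/3 else 0)
        ≤ payoff 2 [1/3, 1/3, 2/3, 2/3] (detRun A [1/3, 1/3, 2/3, 2/3]) := by
    intro b
    refine le_trans (le_of_eq ?_) (load_le_payoff 2 _ _ b)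
    rw [Finset.sum_filter]
    simp [Fin.sum_univ_succ, detRun, add_assoc]
    rfl
  -- If both large items avoid the bin of the small ones, they share the bin of the first of them.
  have k1 := key (A [1/3])
  have k2 := key (A [1/3, 1/3, 2/3])
  have hz : A [1/3, 1/3, 2/3] = A [1/3] ∨ A [1/3, 1/3, 2/3, 2/3] = A [1/3] ∨
      A [1/3, 1/3, 2/3, 2/3] = A [1/3, 1/3, 2/3] := by omega
  rw [← h] at k1 k2
  rcases hz with hz | hz | hz <;> simp only [hz, if_true] at k1 k2 <;>
    split_ifs at k1 k2 <;> linarith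

end BinStretch

theorem deterministic_lower_bound_two_bins (A : List ℝ → Fin 2) :
    ∃ I : List ℝ, BinStretch.IsInstance 2 I ∧
      (∀ a ∈ I, a = 1/3 ∨ a = 2/3 ∨ a = 1) ∧
      (4 : ℝ) / 3 ≤ BinStretch.payoff 2 I (BinStretch.detRun A I) := by
  by_cases h : A [1/3] = A [1/3, 1/3]
  · exact ⟨_, BinStretch.isInstance_together, by simp, BinStretch.payoff_together A h⟩
  · exact ⟨_, BinStretch.isInstance_separated, by simp, BinStretch.payoff_separated A h⟩
end
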